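/- (Main theorem, low threshold rank case.) There exists a universal constant c > 0 such that the following holds. Let n ≥ 1, ε ∈ (0,1), let J : Fin n → Fin n → ℝ be symmetric and regular with Σ_j |J i j| = J' > 0 for every i, let A be the matrix A i j = |J i j|/J', let rank(τ) be the number of eigenvalues of A (with multiplicity) that are ≥ τ, and set t = ⌈rank(c·ε²)/(c·ε²)⌉. Let Z = Σ_{x ∈ {-1,1}^n} exp(Σ_{i,j} J i j · x i · x j), and let V be the supremum, over all level-(t+2) Lasserre solutions (μ_S, v_{S,α}) on Fin n, of Σ_{i,j} J i j · E_{μ_{{i,j}}}[x i · x j] + min over S ⊆ Fin n with |S| ≤ t of [ H(μ_S) + Σ_{i ∉ S} H(μ_i | μ_S) ]. Then log Z ≤ V ≤ log Z + ε·n·J'. -/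

import Mathlib

open scoped BigOperators

noncomputable section

/-- The set `{-1, 1}` of spin values. -/
abbrev B : Finset ℝ := {-1, 1}

/-- The discrete cube `{-1,1}^n`. -/
abbrev Cube (n : ℕ) := Fin n → ↥B

/-- Assignments of spin values to the coordinates in `S`. -/
abbrev Asg {n : ℕ} (S : Finset (Fin n)) := ↥S → ↥B

/-- Shannon entropy (in nats), with the convention `0 * log 0 = 0`. -/
def ent {D : Type*} [Fintype D] (p : D → ℝ) : ℝ := -∑ d, p d * Real.log (p d)

/-- Restriction of an assignment on `S` to a subset `R ⊆ S`. -/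
def res {n : ℕ} {R S : Finset (Fin n)} (h : R ⊆ S) (y : Asg S) : Asg R :=
  fun i => y ⟨i.1, h i.2⟩

/-- The marginal on `R ⊆ S` of a local distribution on assignments to `S`. -/
def margTo {n : ℕ} {S : Finset (Fin n)} (μ : Asg S → ℝ) {R : Finset (Fin n)}
    (h : R ⊆ S) (z : Asg R) : ℝ :=
  ∑ y : Asg S, if res h y = z then μ y else 0

/-- A level-`k` Sherali–Adams consistent family on `Fin n`: local distributions
`μ_S` over assignments to each `S ⊆ Fin n` with `|S| ≤ k`, nonnegative, summing
to `1`, and consistent on intersections whenever `|S ∪ T| ≤ k`. -/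
structure SAFamily (n k : ℕ) where
  μ : (S : Finset (Fin n)) → Asg S → ℝ
  nonneg : ∀ S : Finset (Fin n), S.card ≤ k → ∀ y : Asg S, 0 ≤ μ S y
  sum_one : ∀ S : Finset (Fin n), S.card ≤ k → ∑ y : Asg S, μ S y = 1
  consistent : ∀ S T : Finset (Fin n), (S ∪ T).card ≤ k → ∀ z : Asg (S ∩ T),
    margTo (μ S) Finset.inter_subset_left z = margTo (μ T) Finset.inter_subset_right z

/-- Extension of an assignment on `S` to `insert i S` with value `a` at `i`. -/
def extAsg {n : ℕ} {S : Finset (Fin n)} (i : Fin n) (y : Asg S) (a : ↥B) :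
    Asg (insert i S) :=
  fun j => if h : j.1 = i then a else
    y ⟨j.1, by
      rcases Finset.mem_insert.mp j.2 with h' | h'
      · exact absurd h' h
      · exact h'⟩

/-- The conditional entropy `H(μ_i | μ_S)` computed from the local distributions
`μ_{S∪{i}}` and `μ_S` of an SA family (terms with `μ_S(x_S) = 0` contribute `0`). -/
def condEnt {n k : ℕ} (F : SAFamily n k) (S : Finset (Fin n)) (i : Fin n) : ℝ :=
  ∑ y : Asg S, F.μ S y *
    ent (fun a : ↥B => F.μ (insert i S) (extAsg i y a) / F.μ S y)

/-- The pairwise correlation `E_{μ_{{i,j}}}[x_i x_j]` of an SA family. -/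
def pairExp {n k : ℕ} (F : SAFamily n k) (i j : Fin n) : ℝ :=
  ∑ y : Asg ({i, j} : Finset (Fin n)),
    F.μ {i, j} y * (y ⟨i, by simp⟩ : ℝ) * (y ⟨j, by simp⟩ : ℝ)

/-- The augmented mean-field pseudo-entropy of an SA family at level `k'`:
`min_{|S| ≤ k'} [ H(μ_S) + Σ_{i ∉ S} H(μ_i | μ_S) ]`. -/
def pseudoEnt {n k : ℕ} (F : SAFamily n k) (k' : ℕ) : ℝ :=
  (Finset.univ.filter (fun S : Finset (Fin n) => S.card ≤ k')).inf'
    ⟨∅, Finset.mem_filter.mpr ⟨Finset.mem_univ _, by simp⟩⟩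
    (fun S => ent (F.μ S) + ∑ i ∈ Sᶜ, condEnt F S i)

/-- The total interaction strength `J_T = Σ_{i,j} |J i j|`. -/
def JT {n : ℕ} (J : Fin n → Fin n → ℝ) : ℝ := ∑ i : Fin n, ∑ j : Fin n, |J i j|

/-- `E[x_i | x_S]`, computed from `μ_{S∪{i}}` and `μ_S`
(equal to `0` when `μ_S(x_S) = 0`, since `·/0 = 0` in `ℝ`). -/
def condExp1 {n k : ℕ} (F : SAFamily n k) (S : Finset (Fin n)) (y : Asg S) (i : Fin n) : ℝ :=
  (∑ z : Asg (S ∪ {i}), if res Finset.subset_union_left z = y then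
      F.μ (S ∪ {i}) z * (z ⟨i, by simp⟩ : ℝ) else 0) / F.μ S y

/-- `E[x_i x_j | x_S]`, computed from `μ_{S∪{i,j}}` and `μ_S`. -/
def condExp2 {n k : ℕ} (F : SAFamily n k) (S : Finset (Fin n)) (y : Asg S) (i j : Fin n) : ℝ :=
  (∑ z : Asg (S ∪ {i, j}), if res Finset.subset_union_left z = y then
      F.μ (S ∪ {i, j}) z * (z ⟨i, by simp⟩ : ℝ) * (z ⟨j, by simp⟩ : ℝ) else 0) / F.μ S y

/-- `Σ_{x_S} μ_S(x_S) ( E[x_i x_j | x_S] − E[x_i | x_S] E[x_j | x_S] )`: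
the average conditional covariance of coordinates `i, j` given `S`. -/
def condCov {n k : ℕ} (F : SAFamily n k) (S : Finset (Fin n)) (i j : Fin n) : ℝ :=
  ∑ y : Asg S, F.μ S y * (condExp2 F S y i j - condExp1 F S y i * condExp1 F S y j)

open scoped RealInnerProductSpace

/-- A level-`k` Lasserre solution on `Fin n`: a level-`k` Sherali–Adams
consistent family together with vectors `v_{S,α}` in a finite-dimensional real
inner product space whose inner products realize the joint local probabilities:
`⟪v_{S,α}, v_{T,β}⟫ = Pr_{μ_{S∪T}}[x_S = α ∧ x_T = β]` whenever `|S ∪ T| ≤ k`. -/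
structure LasserreSol (n k : ℕ) extends SAFamily n k where
  dim : ℕ
  vec : (S : Finset (Fin n)) → Asg S → EuclideanSpace ℝ (Fin dim)
  inner_eq : ∀ S T : Finset (Fin n), (S ∪ T).card ≤ k →
    ∀ (α : Asg S) (β : Asg T),
      ⟪vec S α, vec T β⟫ = ∑ y : Asg (S ∪ T),
        if res Finset.subset_union_left y = α ∧ res Finset.subset_union_right y = β
        then toSAFamily.μ (S ∪ T) y else 0

/-- The `τ`-threshold rank of a Hermitian (real symmetric) matrix `A`: the number
of eigenvalues of `A`, counted with multiplicity, that are at least `τ`. -/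
def thresholdRank {n : ℕ} {A : Matrix (Fin n) (Fin n) ℝ} (hA : A.IsHermitian)
    (τ : ℝ) : ℕ :=
  (Finset.univ.filter (fun i : Fin n => τ ≤ hA.eigenvalues i)).card

namespace LTR

/-! ### Spectral part -/

lemma quad_le {n : ℕ} (N : Fin n → Fin n → ℝ) (hs : ∀ i j, N i j = N j i)
    (h0 : ∀ i j, 0 ≤ N i j) (D : ℝ) (hD : ∀ j, ∑ i, N i j ≤ D) (u : Fin n → ℝ) :
    ∑ i, ∑ j, u i * u j * N i j ≤ D * ∑ i, u i ^ 2 := by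
  have h1 : ∀ i j, u i * u j * N i j ≤ u i ^ 2 * N i j / 2 + u j ^ 2 * N i j / 2 := by
    intro i j
    nlinarith [mul_nonneg (sq_nonneg (u i - u j)) (h0 i j)]
  have h2 : ∑ i, ∑ j, u j ^ 2 * N i j / 2 ≤ D * (∑ i, u i ^ 2) / 2 := by
    rw [Finset.sum_comm, Finset.mul_sum, Finset.sum_div]
    refine Finset.sum_le_sum fun j _ => ?_
    rw [← Finset.sum_div, ← Finset.mul_sum]
    nlinarith [mul_le_mul_of_nonneg_left (hD j) (sq_nonneg (u j))]
  have h3 : ∑ i, ∑ j, u i ^ 2 * N i j / 2 = ∑ i, ∑ j, u j ^ 2 * N i j / 2 := by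
    rw [Finset.sum_comm]
    refine Finset.sum_congr rfl fun i _ => Finset.sum_congr rfl fun j _ => ?_
    rw [hs]
  calc ∑ i, ∑ j, u i * u j * N i j
      ≤ ∑ i, ∑ j, (u i ^ 2 * N i j / 2 + u j ^ 2 * N i j / 2) :=
        Finset.sum_le_sum fun i _ => Finset.sum_le_sum fun j _ => h1 i j
    _ = ∑ i, ∑ j, u i ^ 2 * N i j / 2 + ∑ i, ∑ j, u j ^ 2 * N i j / 2 := by
        simp only [Finset.sum_add_distrib]
    _ ≤ D * ∑ i, u i ^ 2 := by rw [h3]; linarith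

lemma spectral_bound {n : ℕ} {A : Matrix (Fin n) (Fin n) ℝ} (hA : A.IsHermitian)
    (hA0 : ∀ i j, 0 ≤ A i j) (hA1 : ∀ j, ∑ i, A i j ≤ 1)
    (N : Fin n → Fin n → ℝ) (hs : ∀ i j, N i j = N j i)
    (h0 : ∀ i j, 0 ≤ N i j) (hpsd : ∀ u : Fin n → ℝ, 0 ≤ ∑ i, ∑ j, u i * u j * N i j)
    (hdiag : ∀ i, N i i ≤ 1) (D : ℝ) (hD : ∀ j, ∑ i, N i j ≤ D) (τ : ℝ) (hτ : 0 ≤ τ) :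
    ∑ i, ∑ j, A i j * N i j ≤ thresholdRank hA τ * D + τ * n := by
  classical
  set u : Fin n → Fin n → ℝ := fun k i => hA.eigenvectorBasis k i with hu
  set l := hA.eigenvalues with hl
  have hev : ∀ k i, ∑ j, A i j * u k j = l k * u k i := by
    intro k i
    have := congrFun (hA.mulVec_eigenvectorBasis k) i
    simpa [Matrix.mulVec, dotProduct] using this
  have hcompl : ∀ i j, ∑ k, u k i * u k j = if i = j then 1 else 0 := by
    intro i j
    have := hA.eigenvectorBasis.sum_inner_mul_inner (EuclideanSpace.single i 1)
      (EuclideanSpace.single j 1)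
    simp [EuclideanSpace.inner_single_left, EuclideanSpace.inner_single_right] at this
    simpa [hu, Pi.single_apply, eq_comm] using this
  have hnorm : ∀ k, ∑ i, u k i ^ 2 = 1 := by
    intro k
    have := hA.eigenvectorBasis.orthonormal.1 k
    rw [EuclideanSpace.norm_eq, Real.sqrt_eq_one] at this
    simpa [hu] using this
  have hAe : ∀ i j, A i j = ∑ k, l k * (u k i * u k j) := by
    intro i j
    calc A i j = ∑ m, A i m * (if m = j then 1 else 0) := by simp
      _ = ∑ m, ∑ k, A i m * (u k m * u k j) := by
          refine Finset.sum_congr rfl fun m _ => ?_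
          rw [← hcompl, Finset.mul_sum]
      _ = ∑ k, (∑ m, A i m * u k m) * u k j := by
          rw [Finset.sum_comm]
          refine Finset.sum_congr rfl fun k _ => ?_
          rw [Finset.sum_mul]
          exact Finset.sum_congr rfl fun m _ => by ring
      _ = _ := by
          refine Finset.sum_congr rfl fun k _ => ?_
          rw [hev]; ring
  set Q : Fin n → ℝ := fun k => ∑ i, ∑ j, u k i * u k j * N i j with hQ
  have hQ0 : ∀ k, 0 ≤ Q k := fun k => hpsd (u k)
  have hQD : ∀ k, Q k ≤ D := fun k => by
    have := quad_le N hs h0 D hD (u k)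
    rwa [hnorm, mul_one] at this
  have hl1 : ∀ k, l k ≤ 1 := by
    intro k
    have hsA : ∀ i j, A i j = A j i := fun i j => by
      have := hA.apply i j
      simpa using this.symm
    have := quad_le (fun i j => A i j) hsA hA0 1 hA1 (u k)
    rw [hnorm, mul_one] at this
    have h2 : ∑ i, ∑ j, u k i * u k j * A i j = l k := by
      calc _ = ∑ i, u k i * ∑ j, A i j * u k j := by
              refine Finset.sum_congr rfl fun i _ => ?_
              rw [Finset.mul_sum]
              exact Finset.sum_congr rfl fun j _ => by ring
        _ = l k * ∑ i, u k i ^ 2 := by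
              rw [Finset.mul_sum]
              refine Finset.sum_congr rfl fun i _ => ?_
              rw [hev]; ring
        _ = l k := by rw [hnorm, mul_one]
    linarith
  have htot : ∑ i, ∑ j, A i j * N i j = ∑ k, l k * Q k := by
    calc ∑ i, ∑ j, A i j * N i j = ∑ i, ∑ j, ∑ k, l k * (u k i * u k j * N i j) := by
          refine Finset.sum_congr rfl fun i _ => Finset.sum_congr rfl fun j _ => ?_
          rw [hAe, Finset.sum_mul]
          exact Finset.sum_congr rfl fun k _ => by ring
      _ = ∑ i, ∑ k, ∑ j, l k * (u k i * u k j * N i j) :=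
          Finset.sum_congr rfl fun i _ => Finset.sum_comm
      _ = ∑ k, ∑ i, ∑ j, l k * (u k i * u k j * N i j) := Finset.sum_comm
      _ = _ := by simp only [hQ, Finset.mul_sum]
  have htr : ∑ k, Q k ≤ n := by
    calc ∑ k, Q k = ∑ i, ∑ j, ∑ k, u k i * u k j * N i j := by
          rw [hQ, Finset.sum_comm]
          exact Finset.sum_congr rfl fun i _ => Finset.sum_comm
      _ = ∑ i, N i i := by
          refine Finset.sum_congr rfl fun i _ => ?_
          simp [← Finset.sum_mul, hcompl]
      _ ≤ ∑ i : Fin n, 1 := Finset.sum_le_sum fun i _ => hdiag i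
      _ = n := by simp
  rw [htot]
  have hk : ∀ k, l k * Q k ≤ (if τ ≤ l k then D else 0) + τ * Q k := by
    intro k
    split_ifs with h
    · nlinarith [hQ0 k, hQD k, hl1 k, mul_nonneg hτ (hQ0 k)]
    · push Not at h
      nlinarith [hQ0 k]
  calc ∑ k, l k * Q k ≤ ∑ k, ((if τ ≤ l k then D else 0) + τ * Q k) :=
        Finset.sum_le_sum fun k _ => hk k
    _ = thresholdRank hA τ * D + τ * ∑ k, Q k := by
        rw [Finset.sum_add_distrib, ← Finset.mul_sum, ← Finset.sum_filter]
        simp [thresholdRank, hl]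
    _ ≤ _ := by
        have := mul_le_mul_of_nonneg_left htr hτ
        linarith

/-! ### Gibbs inequality -/

lemma gibbs {ι : Type*} [Fintype ι] (p w : ι → ℝ) (hp : ∀ i, 0 ≤ p i) (hw : ∀ i, 0 ≤ w i)
    (hpw : ∀ i, 0 < p i → 0 < w i) (h1 : ∑ i, p i = 1) :
    ∑ i, p i * (Real.log (w i) - Real.log (p i)) ≤ Real.log (∑ i, w i) := by
  set Z := ∑ i, w i with hZ
  have hZ0 : 0 < Z := by
    have : ∃ i, 0 < p i := by
      by_contra h
      push Not at h
      have : ∑ i, p i ≤ 0 := Finset.sum_nonpos fun i _ => h i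
      linarith
    obtain ⟨i, hi⟩ := this
    exact lt_of_lt_of_le (hpw i hi) (Finset.single_le_sum (fun j _ => hw j) (Finset.mem_univ i))
  have key : ∀ i, p i * (Real.log (w i) - Real.log (p i)) ≤ p i * Real.log Z + w i / Z - p i := by
    intro i
    rcases (hp i).eq_or_lt with h | h
    · rw [← h]; simp; exact div_nonneg (hw i) hZ0.le
    · have hwi := hpw i h
      have h2 := Real.log_le_sub_one_of_pos (x := w i / (p i * Z)) (by positivity)
      rw [Real.log_div hwi.ne' (by positivity), Real.log_mul h.ne' hZ0.ne'] at h2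
      have h3 := mul_le_mul_of_nonneg_left h2 h.le
      have h4 : p i * (w i / (p i * Z) - 1) = w i / Z - p i := by
        field_simp
      rw [h4] at h3
      linarith
  calc _ ≤ ∑ i, (p i * Real.log Z + w i / Z - p i) := Finset.sum_le_sum fun i _ => key i
    _ = Real.log Z := by
      rw [Finset.sum_sub_distrib, Finset.sum_add_distrib, ← Finset.sum_mul, ← Finset.sum_div,
        h1, ← hZ, div_self hZ0.ne']
      ring

/-! ### Pseudo-expectations -/

/-- The spin `1`. -/
def bOne : ↥B := ⟨1, by simp⟩

/-- Extension of a local assignment to the whole cube. -/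
def ext {n : ℕ} {S : Finset (Fin n)} (y : Asg S) : Cube n :=
  fun i => if h : i ∈ S then y ⟨i, h⟩ else bOne

/-- Restriction of a cube point to `S`. -/
def rs {n : ℕ} (S : Finset (Fin n)) (x : Cube n) : Asg S := fun i => x i.1

/-- `f` depends only on the coordinates in `S`. -/
def Dep {n : ℕ} (S : Finset (Fin n)) (f : Cube n → ℝ) : Prop :=
  ∀ x x' : Cube n, (∀ i ∈ S, x i = x' i) → f x = f x'

/-- Indicator of `x_S = y`. -/
def ind {n : ℕ} {S : Finset (Fin n)} (y : Asg S) (x : Cube n) : ℝ :=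
  if rs S x = y then 1 else 0

/-- Pseudo-expectation. -/
def PE {n k : ℕ} (F : SAFamily n k) (T : Finset (Fin n)) (f : Cube n → ℝ) : ℝ :=
  ∑ y : Asg T, F.μ T y * f (ext y)

lemma spin_sq (a : ↥B) : (a : ℝ) * a = 1 := by
  have := a.2
  simp only [B, Finset.mem_insert, Finset.mem_singleton] at this
  rcases this with h | h <;> rw [h] <;> norm_num

lemma rs_ext {n : ℕ} {S : Finset (Fin n)} (y : Asg S) : rs S (ext y) = y := by
  funext i
  simp [rs, ext]

lemma ext_rs {n : ℕ} {S : Finset (Fin n)} (x : Cube n) : ∀ i ∈ S, ext (rs S x) i = x i := by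
  intro i hi
  simp [rs, ext, hi]

lemma rs_ext_sub {n : ℕ} {S T : Finset (Fin n)} (h : S ⊆ T) (y : Asg T) :
    rs S (ext y) = res h y := by
  funext i
  simp [rs, ext, res, h i.2]

lemma rs_eq_iff {n : ℕ} {S : Finset (Fin n)} (x x' : Cube n) :
    rs S x = rs S x' ↔ ∀ i ∈ S, x i = x' i := by
  constructor
  · intro h i hi
    exact congrFun h ⟨i, hi⟩
  · intro h
    funext i
    exact h i.1 i.2

lemma Dep.mono {n : ℕ} {S T : Finset (Fin n)} {f : Cube n → ℝ} (hf : Dep S f) (h : S ⊆ T) :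
    Dep T f := fun x x' hx => hf x x' fun i hi => hx i (h hi)

lemma Dep.rs {n : ℕ} {S : Finset (Fin n)} (g : Asg S → ℝ) : Dep S (fun x => g (rs S x)) := by
  intro x x' h
  simp only
  rw [(rs_eq_iff x x').2 h]

lemma Dep.ind {n : ℕ} {S : Finset (Fin n)} (y : Asg S) : Dep S (ind y) :=
  Dep.rs (fun z => if z = y then 1 else 0)

lemma Dep.coord {n : ℕ} {S : Finset (Fin n)} {i : Fin n} (hi : i ∈ S) (g : ↥B → ℝ) :
    Dep S (fun x => g (x i)) := by
  intro x x' h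
  simp only [h i hi]

lemma Dep.mul {n : ℕ} {S : Finset (Fin n)} {f g : Cube n → ℝ} (hf : Dep S f) (hg : Dep S g) :
    Dep S (fun x => f x * g x) := fun x x' h => by simp only [hf x x' h, hg x x' h]

lemma Dep.add {n : ℕ} {S : Finset (Fin n)} {f g : Cube n → ℝ} (hf : Dep S f) (hg : Dep S g) :
    Dep S (fun x => f x + g x) := fun x x' h => by simp only [hf x x' h, hg x x' h]

lemma Dep.sub {n : ℕ} {S : Finset (Fin n)} {f g : Cube n → ℝ} (hf : Dep S f) (hg : Dep S g) :
    Dep S (fun x => f x - g x) := fun x x' h => by simp only [hf x x' h, hg x x' h]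

lemma Dep.ext_rs {n : ℕ} {S : Finset (Fin n)} {f : Cube n → ℝ} (hf : Dep S f) (x : Cube n) :
    f (LTR.ext (LTR.rs S x)) = f x := hf _ _ (LTR.ext_rs x)

lemma sum_ind {n : ℕ} {S : Finset (Fin n)} (g : Asg S → ℝ) (x : Cube n) :
    ∑ y : Asg S, ind y x * g y = g (rs S x) := by
  simp [ind]

lemma sum_ind_one {n : ℕ} {S : Finset (Fin n)} (x : Cube n) :
    ∑ y : Asg S, ind y x = 1 := by
  simp [ind]

lemma marg_eq {n k : ℕ} (F : SAFamily n k) {S T : Finset (Fin n)} (h : S ⊆ T) (hT : T.card ≤ k)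
    (z : Asg S) : ∑ y : Asg T, (if res h y = z then F.μ T y else 0) = F.μ S z := by
  have gen : ∀ R : Finset (Fin n), R = S ∩ T → ∀ (h1 : R ⊆ S) (h2 : R ⊆ T) (z : Asg R),
      margTo (F.μ S) h1 z = margTo (F.μ T) h2 z := by
    rintro _ rfl h1 h2 z
    exact F.consistent S T (by rwa [Finset.union_eq_right.2 h]) z
  have := gen S (Finset.inter_eq_left.2 h).symm subset_rfl h z
  unfold margTo at this
  rw [← this]
  have h3 : ∀ y : Asg S, res (subset_rfl : S ⊆ S) y = y := fun y => rfl
  simp [h3]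

lemma PE_marg {n k : ℕ} (F : SAFamily n k) {S T : Finset (Fin n)} (h : S ⊆ T) (hT : T.card ≤ k)
    {f : Cube n → ℝ} (hf : Dep S f) : PE F T f = PE F S f := by
  unfold PE
  calc ∑ y : Asg T, F.μ T y * f (ext y)
      = ∑ y : Asg T, ∑ z : Asg S, (if res h y = z then F.μ T y else 0) * f (ext z) := by
        refine Finset.sum_congr rfl fun y _ => ?_
        simp only [ite_mul, zero_mul, Finset.sum_ite_eq, Finset.mem_univ, if_true]
        rw [← rs_ext_sub h, hf.ext_rs]
    _ = ∑ z : Asg S, (∑ y : Asg T, (if res h y = z then F.μ T y else 0)) * f (ext z) := by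
        rw [Finset.sum_comm]
        simp only [Finset.sum_mul]
    _ = _ := by
        refine Finset.sum_congr rfl fun z _ => ?_
        rw [marg_eq F h hT]

lemma PE_add {n k : ℕ} (F : SAFamily n k) (T : Finset (Fin n)) (f g : Cube n → ℝ) :
    PE F T (fun x => f x + g x) = PE F T f + PE F T g := by
  simp [PE, mul_add, Finset.sum_add_distrib]

lemma PE_sub {n k : ℕ} (F : SAFamily n k) (T : Finset (Fin n)) (f g : Cube n → ℝ) :
    PE F T (fun x => f x - g x) = PE F T f - PE F T g := by
  simp [PE, mul_sub, Finset.sum_sub_distrib]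

lemma PE_smul {n k : ℕ} (F : SAFamily n k) (T : Finset (Fin n)) (c : ℝ) (f : Cube n → ℝ) :
    PE F T (fun x => c * f x) = c * PE F T f := by
  simp only [PE, Finset.mul_sum]
  exact Finset.sum_congr rfl fun y _ => by ring

lemma PE_sum {n k : ℕ} (F : SAFamily n k) (T : Finset (Fin n)) {ι : Type*} (s : Finset ι)
    (f : ι → Cube n → ℝ) :
    PE F T (fun x => ∑ i ∈ s, f i x) = ∑ i ∈ s, PE F T (f i) := by
  simp only [PE, Finset.mul_sum]
  exact Finset.sum_comm

lemma PE_mono {n k : ℕ} (F : SAFamily n k) (T : Finset (Fin n)) (hT : T.card ≤ k)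
    {f g : Cube n → ℝ} (h : ∀ x, f x ≤ g x) : PE F T f ≤ PE F T g :=
  Finset.sum_le_sum fun y _ => mul_le_mul_of_nonneg_left (h _) (F.nonneg T hT y)

lemma PE_one {n k : ℕ} (F : SAFamily n k) (T : Finset (Fin n)) (hT : T.card ≤ k) :
    PE F T (fun _ => 1) = 1 := by
  simp [PE, F.sum_one T hT]

lemma PE_ind {n k : ℕ} (F : SAFamily n k) {S T : Finset (Fin n)} (h : S ⊆ T) (hT : T.card ≤ k)
    (y : Asg S) : PE F T (ind y) = F.μ S y := by
  rw [PE_marg F h hT (Dep.ind y)]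
  simp [PE, ind, rs_ext]

/-- Conditional expectation of `x_i` given `x_S = y`. -/
def mm {n k : ℕ} (F : SAFamily n k) (S : Finset (Fin n)) (i : Fin n) (y : Asg S) : ℝ :=
  PE F (insert i S) (fun x => ind y x * (x i : ℝ)) / F.μ S y

/-- Conditional expectation of `x_i x_j` given `x_S = y`. -/
def cc {n k : ℕ} (F : SAFamily n k) (S : Finset (Fin n)) (i j : Fin n) (y : Asg S) : ℝ :=
  PE F (insert i S ∪ insert j S) (fun x => ind y x * ((x i : ℝ) * (x j : ℝ))) / F.μ S y

/-- Conditional distribution of `x_i` given `x_S = y`. -/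
def qq {n k : ℕ} (F : SAFamily n k) (S : Finset (Fin n)) (i : Fin n) (y : Asg S) (a : ↥B) : ℝ :=
  PE F (insert i S) (fun x => ind y x * (if x i = a then 1 else 0)) / F.μ S y

lemma ind_nonneg {n : ℕ} {S : Finset (Fin n)} (y : Asg S) (x : Cube n) : 0 ≤ ind y x := by
  unfold ind; split_ifs <;> norm_num

lemma abs_PE_ind_le {n k : ℕ} (F : SAFamily n k) {S T : Finset (Fin n)} (h : S ⊆ T)
    (hT : T.card ≤ k) (y : Asg S) (g : Cube n → ℝ) (hg : ∀ x, |g x| ≤ 1) :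
    |PE F T (fun x => ind y x * g x)| ≤ F.μ S y := by
  rw [abs_le]
  constructor
  · rw [← PE_ind F h hT, neg_eq_neg_one_mul, ← PE_smul]
    refine PE_mono F T hT fun x => ?_
    nlinarith [(abs_le.1 (hg x)).1, ind_nonneg y x]
  · rw [← PE_ind F h hT]
    refine PE_mono F T hT fun x => ?_
    nlinarith [(abs_le.1 (hg x)).2, ind_nonneg y x]

lemma mul_div_of_abs_le {a b : ℝ} (h : |a| ≤ b) : b * (a / b) = a := by
  rcases eq_or_ne b 0 with hb | hb
  · subst hb
    have := abs_nonpos_iff.1 h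
    simp [this]
  · field_simp

lemma abs_spin (a : ↥B) : |(a : ℝ)| = 1 := by
  have := spin_sq a
  rcases mul_self_eq_one_iff.1 this with h | h <;> rw [h] <;> simp

lemma PE_ind_x {n k : ℕ} (F : SAFamily n k) {S T : Finset (Fin n)} (i : Fin n)
    (h : insert i S ⊆ T) (hT : T.card ≤ k) (y : Asg S) :
    PE F T (fun x => ind y x * (x i : ℝ)) = F.μ S y * mm F S i y := by
  rw [PE_marg F h hT (((Dep.ind y).mono (Finset.subset_insert _ _)).mul
    (Dep.coord (Finset.mem_insert_self _ _) (fun a => (a : ℝ))))]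
  unfold mm
  rw [mul_div_of_abs_le]
  exact abs_PE_ind_le F (Finset.subset_insert _ _) ((Finset.card_le_card h).trans hT) y _
    fun x => (abs_spin _).le

lemma PE_ind_xx {n k : ℕ} (F : SAFamily n k) {S T : Finset (Fin n)} (i j : Fin n)
    (h : insert i S ∪ insert j S ⊆ T) (hT : T.card ≤ k) (y : Asg S) :
    PE F T (fun x => ind y x * ((x i : ℝ) * (x j : ℝ))) = F.μ S y * cc F S i j y := by
  have hS : S ⊆ insert i S ∪ insert j S := by grind
  rw [PE_marg F h hT (((Dep.ind y).mono hS).mul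
    ((Dep.coord (i := i) (by simp) (fun a => (a : ℝ))).mul
      (Dep.coord (i := j) (by simp) (fun a => (a : ℝ)))))]
  unfold cc
  rw [mul_div_of_abs_le]
  refine abs_PE_ind_le F hS ((Finset.card_le_card h).trans hT) y _ fun x => ?_
  rw [abs_mul, abs_spin, abs_spin, mul_one]

lemma PE_ind_q {n k : ℕ} (F : SAFamily n k) {S T : Finset (Fin n)} (i : Fin n)
    (h : insert i S ⊆ T) (hT : T.card ≤ k) (y : Asg S) (a : ↥B) :
    PE F T (fun x => ind y x * (if x i = a then 1 else 0)) = F.μ S y * qq F S i y a := by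
  rw [PE_marg F h hT (((Dep.ind y).mono (Finset.subset_insert _ _)).mul
    (Dep.coord (Finset.mem_insert_self _ _) (fun b => if b = a then 1 else 0)))]
  unfold qq
  rw [mul_div_of_abs_le]
  refine abs_PE_ind_le F (Finset.subset_insert _ _) ((Finset.card_le_card h).trans hT) y _
    fun x => ?_
  split_ifs <;> simp

lemma PE_split {n k : ℕ} (F : SAFamily n k) (S T : Finset (Fin n)) (f : Cube n → ℝ) :
    PE F T f = ∑ y : Asg S, PE F T (fun x => ind y x * f x) := by
  rw [← PE_sum]
  congr 1
  funext x
  rw [← Finset.sum_mul, sum_ind_one, one_mul]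

lemma ind_mul_rs {n : ℕ} {S : Finset (Fin n)} (y : Asg S) (g : Asg S → ℝ) (x : Cube n) :
    ind y x * g (rs S x) = ind y x * g y := by
  unfold ind
  split_ifs with h
  · rw [h]
  · simp

lemma mm_sq_le {n k : ℕ} (F : SAFamily n k) {S : Finset (Fin n)} (i : Fin n)
    (hS : (insert i S).card ≤ k) (y : Asg S) : mm F S i y ^ 2 ≤ 1 := by
  have h := abs_PE_ind_le F (Finset.subset_insert i S) hS y (fun x => (x i : ℝ))
    fun x => (abs_spin _).le
  rw [sq_le_one_iff_abs_le_one]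
  unfold mm
  rw [abs_div, abs_of_nonneg (F.nonneg S ((Finset.card_le_card (Finset.subset_insert i S)).trans hS) y)]
  exact div_le_one_of_le₀ h (F.nonneg S ((Finset.card_le_card (Finset.subset_insert i S)).trans hS) y)

/-- Conditional covariance. -/
def cv {n k : ℕ} (F : SAFamily n k) (S : Finset (Fin n)) (i j : Fin n) (y : Asg S) : ℝ :=
  cc F S i j y - mm F S i y * mm F S j y

lemma PE_ind_cov {n k : ℕ} (F : SAFamily n k) {S T : Finset (Fin n)} (i j : Fin n)
    (h : insert i S ∪ insert j S ⊆ T) (hT : T.card ≤ k) (y : Asg S) :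
    PE F T (fun x => ind y x * ((x i : ℝ) - mm F S i y) * ((x j : ℝ) - mm F S j y))
      = F.μ S y * cv F S i j y := by
  have hi : insert i S ⊆ T := (Finset.subset_union_left).trans h
  have hj : insert j S ⊆ T := (Finset.subset_union_right).trans h
  have hS : S ⊆ T := (Finset.subset_insert i S).trans hi
  have e : (fun x : Cube n => ind y x * ((x i : ℝ) - mm F S i y) * ((x j : ℝ) - mm F S j y)) =
      fun x => (ind y x * ((x i : ℝ) * (x j : ℝ)) - mm F S j y * (ind y x * (x i : ℝ)))
        - (mm F S i y * (ind y x * (x j : ℝ)) - (mm F S i y * mm F S j y) * ind y x) := by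
    funext x; ring
  rw [e, PE_sub, PE_sub, PE_sub, PE_smul, PE_smul, PE_smul, PE_ind_xx F i j h hT,
    PE_ind_x F i hi hT, PE_ind_x F j hj hT]
  have := PE_ind F hS hT y
  simp only [this]
  unfold cv
  ring

/-- Averaged squared conditional mean. -/
def sqm {n k : ℕ} (F : SAFamily n k) (S : Finset (Fin n)) (i : Fin n) : ℝ :=
  ∑ y : Asg S, F.μ S y * mm F S i y ^ 2

/-- Averaged squared conditional covariance. -/
def NN {n k : ℕ} (F : SAFamily n k) (S : Finset (Fin n)) (i j : Fin n) : ℝ :=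
  ∑ y : Asg S, F.μ S y * cv F S i j y ^ 2

lemma drop {n k : ℕ} (F : SAFamily n k) (S : Finset (Fin n)) (i j : Fin n)
    (hk : S.card + 2 ≤ k) : sqm F S i + NN F S i j ≤ sqm F (insert j S) i := by
  set T := insert i S ∪ insert j S with hTdef
  have hT : T.card ≤ k := by
    have : T = insert i (insert j S) := by grind
    rw [this]
    have h1 := Finset.card_insert_le i (insert j S)
    have h2 := Finset.card_insert_le j S
    omega
  have hiT : insert i S ⊆ T := Finset.subset_union_left
  have hjT : insert j S ⊆ T := Finset.subset_union_right
  have hST : S ⊆ T := (Finset.subset_insert i S).trans hiT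
  have hiT' : insert i (insert j S) ⊆ T := by grind
  set g : Cube n → ℝ := fun x => mm F S i (rs S x) + cv F S i j (rs S x) *
    ((x j : ℝ) - mm F S j (rs S x)) with hg
  have hSj : S ⊆ insert j S := Finset.subset_insert _ _
  have hgd : Dep (insert j S) g :=
    ((Dep.rs (mm F S i)).mono hSj).add (((Dep.rs (cv F S i j)).mono hSj).mul
      ((Dep.coord (Finset.mem_insert_self _ _) (fun a => (a : ℝ))).sub
        ((Dep.rs (mm F S j)).mono hSj)))
  have hup : PE F T (fun x => 2 * g x * (x i : ℝ) - g x ^ 2) ≤ sqm F (insert j S) i := by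
    rw [PE_split F (insert j S), sqm]
    refine Finset.sum_le_sum fun y _ => ?_
    have hgy : ∀ x, ind y x * g x = ind y x * g (ext y) := by
      intro x
      have := ind_mul_rs y (fun z => g (ext z)) x
      simp only [hgd.ext_rs] at this
      exact this
    have e : (fun x : Cube n => ind y x * (2 * g x * (x i : ℝ) - g x ^ 2)) =
        fun x => (2 * g (ext y)) * (ind y x * (x i : ℝ)) - g (ext y) ^ 2 * ind y x := by
      funext x
      linear_combination (2 * (x i : ℝ) - g x - g (ext y)) * hgy x
    rw [e, PE_sub, PE_smul, PE_smul, PE_ind_x F i hiT' hT]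
    have := PE_ind F hjT hT y
    simp only [this]
    have h0 := F.nonneg (insert j S) ((Finset.card_le_card hjT).trans hT) y
    nlinarith [mul_nonneg h0 (sq_nonneg (mm F (insert j S) i y - g (ext y)))]
  refine le_trans ?_ hup
  rw [PE_split F S, sqm, NN, ← Finset.sum_add_distrib]
  refine Finset.sum_le_sum fun y _ => ?_
  have e : (fun x : Cube n => ind y x * (2 * g x * (x i : ℝ) - g x ^ 2)) =
      fun x => (2 * mm F S i y - 2 * cv F S i j y * mm F S j y) * (ind y x * (x i : ℝ))
        + 2 * cv F S i j y * (ind y x * ((x i : ℝ) * (x j : ℝ)))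
        - (2 * mm F S i y * cv F S i j y - 2 * cv F S i j y ^ 2 * mm F S j y)
          * (ind y x * (x j : ℝ))
        - ((mm F S i y - cv F S i j y * mm F S j y) ^ 2 + cv F S i j y ^ 2) * ind y x := by
    funext x
    unfold ind
    split_ifs with h
    · simp only [hg, h]
      linear_combination (- cv F S i j y ^ 2) * spin_sq (x j)
    · simp
  rw [e, PE_sub, PE_sub, PE_add, PE_smul, PE_smul, PE_smul, PE_smul, PE_ind_x F i hiT hT,
    PE_ind_x F j hjT hT, PE_ind_xx F i j subset_rfl hT]
  have := PE_ind F hST hT y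
  simp only [this]
  have h0 := F.nonneg S ((Finset.card_le_card hST).trans hT) y
  have hc : cc F S i j y = cv F S i j y + mm F S i y * mm F S j y := by unfold cv; ring
  rw [hc]
  nlinarith [mul_nonneg h0 (mul_nonneg (sq_nonneg (cv F S i j y)) (sq_nonneg (mm F S j y)))]

/-! ### Gram structure -/

/-- The vector attached to a function of the coordinates in `S`. -/
def Vec {n k : ℕ} (L : LasserreSol n k) (S : Finset (Fin n)) (f : Cube n → ℝ) :
    EuclideanSpace ℝ (Fin L.dim) := ∑ z : Asg S, f (ext z) • L.vec S z

lemma inner_Vec {n k : ℕ} (L : LasserreSol n k) (S T : Finset (Fin n)) (h : (S ∪ T).card ≤ k)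
    (f g : Cube n → ℝ) (hf : Dep S f) (hg : Dep T g) :
    ⟪Vec L S f, Vec L T g⟫ = PE L.toSAFamily (S ∪ T) (fun x => f x * g x) := by
  unfold Vec PE
  simp only [sum_inner, inner_sum, inner_smul_left, inner_smul_right, L.inner_eq S T h,
    Finset.mul_sum]
  have e : ∀ y : Asg (S ∪ T), L.μ (S ∪ T) y * (f (ext y) * g (ext y)) =
      ∑ z : Asg S, ∑ z' : Asg T, (starRingEnd ℝ) (f (ext z)) * (g (ext z') *
        if res Finset.subset_union_left y = z ∧ res Finset.subset_union_right y = z'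
        then L.μ (S ∪ T) y else 0) := by
    intro y
    rw [Finset.sum_eq_single (res Finset.subset_union_left y),
      Finset.sum_eq_single (res Finset.subset_union_right y)]
    · rw [if_pos ⟨rfl, rfl⟩, ← rs_ext_sub, ← rs_ext_sub, hf.ext_rs, hg.ext_rs]
      simp only [conj_trivial]
      ring
    · intro z' _ hz'
      rw [if_neg (fun hh => hz' hh.2.symm)]; simp
    · simp
    · intro z _ hz
      refine Finset.sum_eq_zero fun z' _ => ?_
      rw [if_neg (fun hh => hz hh.1.symm)]; simp
    · simp
  rw [Finset.sum_congr rfl fun y _ => e y]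
  symm
  rw [Finset.sum_comm]
  refine Eq.trans ?_ Finset.sum_comm
  refine Finset.sum_congr rfl fun z _ => ?_
  refine Finset.sum_comm.trans ?_
  exact Finset.sum_congr rfl fun z' _ => Finset.sum_congr rfl fun y _ => by ring

lemma psd_sq {n d : ℕ} (w : Fin n → EuclideanSpace ℝ (Fin d)) (u : Fin n → ℝ) :
    0 ≤ ∑ i, ∑ j, u i * u j * ⟪w i, w j⟫ ^ 2 := by
  have : ∑ i, ∑ j, u i * u j * ⟪w i, w j⟫ ^ 2 =
      ∑ a, ∑ b, (∑ i, u i * (w i a * w i b)) ^ 2 := by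
    simp only [PiLp.inner_apply, sq, Finset.sum_mul_sum]
    simp only [RCLike.inner_apply, conj_trivial, Finset.mul_sum]
    calc ∑ i, ∑ j, ∑ a, ∑ b, u i * u j * (w j a * w i a * (w j b * w i b))
        = ∑ i, ∑ a, ∑ j, ∑ b, u i * u j * (w j a * w i a * (w j b * w i b)) :=
          Finset.sum_congr rfl fun i _ => Finset.sum_comm
      _ = ∑ a, ∑ i, ∑ j, ∑ b, u i * u j * (w j a * w i a * (w j b * w i b)) := Finset.sum_comm
      _ = ∑ a, ∑ i, ∑ b, ∑ j, u i * u j * (w j a * w i a * (w j b * w i b)) :=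
          Finset.sum_congr rfl fun a _ => Finset.sum_congr rfl fun i _ => Finset.sum_comm
      _ = ∑ a, ∑ b, ∑ i, ∑ j, u i * u j * (w j a * w i a * (w j b * w i b)) :=
          Finset.sum_congr rfl fun a _ => Finset.sum_comm
      _ = _ := by
          refine Finset.sum_congr rfl fun a _ => Finset.sum_congr rfl fun b _ =>
            Finset.sum_congr rfl fun i _ => Finset.sum_congr rfl fun j _ => by ring
  rw [this]
  positivity

lemma card_union_le {n k : ℕ} {S : Finset (Fin n)} (hk : S.card + 2 ≤ k) (i j : Fin n) :
    (insert i S ∪ insert j S).card ≤ k := by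
  have : insert i S ∪ insert j S = insert i (insert j S) := by grind
  rw [this]
  have h1 := Finset.card_insert_le i (insert j S)
  have h2 := Finset.card_insert_le j S
  omega

lemma NN_psd {n k : ℕ} (L : LasserreSol n k) (S : Finset (Fin n)) (hk : S.card + 2 ≤ k)
    (u : Fin n → ℝ) : 0 ≤ ∑ i, ∑ j, u i * u j * NN L.toSAFamily S i j := by
  set F := L.toSAFamily with hF
  set w : Asg S → Fin n → EuclideanSpace ℝ (Fin L.dim) := fun y i =>
    Vec L (insert i S) (fun x => ind y x * ((x i : ℝ) - mm F S i y)) with hw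
  have hin : ∀ y i j, ⟪w y i, w y j⟫ = F.μ S y * cv F S i j y := by
    intro y i j
    have hd : ∀ i, Dep (insert i S) (fun x => ind y x * ((x i : ℝ) - mm F S i y)) := fun i =>
      ((Dep.ind y).mono (Finset.subset_insert _ _)).mul
        (Dep.coord (Finset.mem_insert_self _ _) (fun a => (a : ℝ) - mm F S i y))
    rw [hw, inner_Vec L _ _ (card_union_le hk i j) _ _ (hd i) (hd j),
      ← PE_ind_cov F i j subset_rfl (card_union_le hk i j)]
    congr 1
    funext x
    unfold ind
    split_ifs <;> ring
  have hN : ∀ i j, NN F S i j = ∑ y, ⟪w y i, w y j⟫ ^ 2 / F.μ S y := by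
    intro i j
    refine Finset.sum_congr rfl fun y _ => ?_
    rw [hin]
    rcases eq_or_ne (F.μ S y) 0 with h | h
    · simp [h]
    · field_simp
  have : ∑ i, ∑ j, u i * u j * NN F S i j =
      ∑ y, (∑ i, ∑ j, u i * u j * ⟪w y i, w y j⟫ ^ 2) / F.μ S y := by
    simp only [hN, Finset.mul_sum, Finset.sum_div]
    calc _ = ∑ i, ∑ y, ∑ j, u i * u j * (⟪w y i, w y j⟫ ^ 2 / F.μ S y) :=
          Finset.sum_congr rfl fun i _ => Finset.sum_comm
      _ = ∑ y, ∑ i, ∑ j, u i * u j * (⟪w y i, w y j⟫ ^ 2 / F.μ S y) := Finset.sum_comm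
      _ = _ := by
        refine Finset.sum_congr rfl fun y _ => Finset.sum_congr rfl fun i _ =>
          Finset.sum_congr rfl fun j _ => by ring
  rw [this]
  exact Finset.sum_nonneg fun y _ => div_nonneg (psd_sq _ _) (F.nonneg S (by omega) y)

lemma cv_symm {n k : ℕ} (F : SAFamily n k) (S : Finset (Fin n)) (i j : Fin n) (y : Asg S) :
    cv F S i j y = cv F S j i y := by
  unfold cv cc
  rw [Finset.union_comm, mul_comm (mm F S i y)]
  simp only [mul_comm]

lemma NN_diag {n k : ℕ} (F : SAFamily n k) (S : Finset (Fin n)) (hk : S.card + 2 ≤ k)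
    (i : Fin n) : NN F S i i ≤ 1 := by
  rw [← F.sum_one S (by omega)]
  refine Finset.sum_le_sum fun y _ => ?_
  have h0 := F.nonneg S (by omega) y
  have hi : (insert i S).card ≤ k := (Finset.card_insert_le i S).trans (by omega)
  rcases h0.eq_or_lt with h | h
  · rw [← h]; simp
  · have hc : F.μ S y * cc F S i i y = F.μ S y * 1 := by
      rw [← PE_ind_xx F i i (subset_rfl) (card_union_le hk i i), mul_one]
      simp only [spin_sq, mul_one]
      exact PE_ind F (by grind) (card_union_le hk i i) y
    have hc' := mul_left_cancel₀ h.ne' hc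
    have hcv : cv F S i i y = 1 - mm F S i y ^ 2 := by unfold cv; rw [hc']; ring
    have hm := mm_sq_le F i hi y
    have hm0 := sq_nonneg (mm F S i y)
    have : cv F S i i y ^ 2 ≤ 1 := by
      rw [hcv]; nlinarith
    nlinarith

lemma exists_good {n k : ℕ} (L : LasserreSol n k) {A : Matrix (Fin n) (Fin n) ℝ}
    (hA : A.IsHermitian) (hA0 : ∀ i j, 0 ≤ A i j) (hA1 : ∀ j, ∑ i, A i j = 1)
    (hn : 1 ≤ n) (ε : ℝ) (hε : 0 < ε) (t : ℕ) (htk : t + 2 ≤ k)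
    (ht : (thresholdRank hA (1 / 4 * ε ^ 2) : ℝ) / (1 / 4 * ε ^ 2) ≤ t) :
    ∃ S : Finset (Fin n), S.card ≤ t ∧
      ∑ i, ∑ j, A i j * ∑ y, L.μ S y * |cv L.toSAFamily S i j y| ≤ ε * n := by
  set F := L.toSAFamily with hF
  set r : ℝ := (thresholdRank hA (1 / 4 * ε ^ 2) : ℝ) with hr
  by_contra hcon
  push Not at hcon
  have hn' : (0 : ℝ) < n := by exact_mod_cast hn
  have step : ∀ S : Finset (Fin n), S.card ≤ t → ∃ j, 3 / 4 * ε ^ 2 * n ≤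
      r * (∑ i, sqm F (insert j S) i - ∑ i, sqm F S i) := by
    intro S hS
    have hbad := hcon S hS
    have hk : S.card + 2 ≤ k := by omega
    have hAtot : ∑ i, ∑ j, A i j = n := by
      exact (Finset.sum_comm).trans (by simp [hA1])
    have hmu : ∀ y, 0 ≤ F.μ S y := fun y => F.nonneg S (by omega) y
    have h1 : ∀ i j, ∑ y, F.μ S y * |cv F S i j y| ≤ NN F S i j / (2 * ε) + ε / 2 := by
      intro i j
      have : ∀ y, F.μ S y * |cv F S i j y| ≤
          F.μ S y * cv F S i j y ^ 2 / (2 * ε) + F.μ S y * (ε / 2) := by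
        intro y
        have h2 : |cv F S i j y| ≤ cv F S i j y ^ 2 / (2 * ε) + ε / 2 := by
          rw [← sq_abs (cv F S i j y)]
          have : |cv F S i j y| ^ 2 / (2 * ε) + ε / 2 - |cv F S i j y|
              = (|cv F S i j y| - ε) ^ 2 / (2 * ε) := by
            field_simp; ring
          have h3 : 0 ≤ (|cv F S i j y| - ε) ^ 2 / (2 * ε) := by positivity
          linarith
        have := mul_le_mul_of_nonneg_left h2 (hmu y)
        calc _ ≤ _ := this
          _ = _ := by ring
      calc _ ≤ ∑ y, (F.μ S y * cv F S i j y ^ 2 / (2 * ε) + F.μ S y * (ε / 2)) :=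
            Finset.sum_le_sum fun y _ => this y
        _ = _ := by
            rw [Finset.sum_add_distrib, ← Finset.sum_div, ← Finset.sum_mul,
              F.sum_one S (by omega), one_mul, NN]
    have h2 : ε * n < (∑ i, ∑ j, A i j * NN F S i j) / (2 * ε) + n * (ε / 2) := by
      calc ε * n < _ := hbad
        _ ≤ ∑ i, ∑ j, A i j * (NN F S i j / (2 * ε) + ε / 2) :=
            Finset.sum_le_sum fun i _ => Finset.sum_le_sum fun j _ =>
              mul_le_mul_of_nonneg_left (h1 i j) (hA0 i j)
        _ = _ := by
            rw [← hAtot]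
            simp only [Finset.sum_div, Finset.sum_mul, ← Finset.sum_add_distrib]
            exact Finset.sum_congr rfl fun i _ => Finset.sum_congr rfl fun j _ => by ring
    have h3 : ε ^ 2 * n < ∑ i, ∑ j, A i j * NN F S i j := by
      have : ε * n / 2 < (∑ i, ∑ j, A i j * NN F S i j) / (2 * ε) := by linarith
      rw [lt_div_iff₀ (by positivity)] at this
      nlinarith
    have : Nonempty (Fin n) := ⟨⟨0, hn⟩⟩
    obtain ⟨j, -, hj⟩ := Finset.exists_max_image Finset.univ (fun j => ∑ i, NN F S i j)
      Finset.univ_nonempty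
    have h4 := spectral_bound hA hA0 (fun j => (hA1 j).le) (NN F S)
      (fun i j => by unfold NN; simp only [cv_symm F S i j])
      (fun i j => Finset.sum_nonneg fun y _ => mul_nonneg (hmu y) (sq_nonneg _))
      (NN_psd L S hk) (NN_diag F S hk) (∑ i, NN F S i j) (fun j' => hj j' (Finset.mem_univ _))
      (1 / 4 * ε ^ 2) (by positivity)
    refine ⟨j, ?_⟩
    have h5 : ∑ i, NN F S i j ≤ ∑ i, sqm F (insert j S) i - ∑ i, sqm F S i := by
      rw [← Finset.sum_sub_distrib]
      refine Finset.sum_le_sum fun i _ => ?_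
      linarith [drop F S i j hk]
    have h6 : r * ∑ i, NN F S i j ≤ r * (∑ i, sqm F (insert j S) i - ∑ i, sqm F S i) :=
      mul_le_mul_of_nonneg_left h5 (Nat.cast_nonneg _)
    linarith
  have iter : ∀ m : ℕ, m ≤ t + 1 → ∃ S : Finset (Fin n), S.card ≤ m ∧
      m * (3 / 4 * ε ^ 2 * n) ≤ r * ∑ i, sqm F S i := by
    intro m
    induction m with
    | zero =>
      intro _
      refine ⟨∅, by simp, ?_⟩
      simp only [Nat.cast_zero, zero_mul]
      refine mul_nonneg (Nat.cast_nonneg _) (Finset.sum_nonneg fun i _ =>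
        Finset.sum_nonneg fun y _ => mul_nonneg (F.nonneg ∅ (by simp) y) (sq_nonneg _))
    | succ m ih =>
      intro hm
      obtain ⟨S, hS, hS2⟩ := ih (by omega)
      obtain ⟨j, hj⟩ := step S (by omega)
      refine ⟨insert j S, (Finset.card_insert_le j S).trans (by omega), ?_⟩
      push_cast
      linarith
  obtain ⟨S, hS, hS2⟩ := iter (t + 1) le_rfl
  have hle : ∑ i, sqm F S i ≤ n := by
    calc _ ≤ ∑ i : Fin n, (1 : ℝ) := by
          refine Finset.sum_le_sum fun i _ => ?_
          rw [← F.sum_one S (by omega)]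
          refine Finset.sum_le_sum fun y _ => ?_
          have h0 := F.nonneg S (by omega) y
          have := mm_sq_le F i ((Finset.card_insert_le i S).trans (by omega)) y
          nlinarith
      _ = n := by simp
  have hr0 : 0 ≤ r := Nat.cast_nonneg _
  rw [div_le_iff₀ (by positivity)] at ht
  have h7 : r * ∑ i, sqm F S i ≤ r * n := mul_le_mul_of_nonneg_left hle hr0
  have h8 : r * n ≤ t * (1 / 4 * ε ^ 2) * n := mul_le_mul_of_nonneg_right ht hn'.le
  push_cast at hS2
  have h9 : 0 < ε ^ 2 * n := by positivity
  have h10 : 0 ≤ (t : ℝ) * (ε ^ 2 * n) := by positivity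
  nlinarith

/-! ### Product measures and the rounded distribution -/

lemma prod_exp {n : ℕ} (q f : Fin n → ↥B → ℝ) :
    ∑ x : Cube n, (∏ i, q i (x i)) * ∏ i, f i (x i) = ∏ i, ∑ a, q i a * f i a := by
  rw [Fintype.prod_sum]
  exact Finset.sum_congr rfl fun x _ => by rw [Finset.prod_mul_distrib]

lemma prod_exp_two {n : ℕ} (q : Fin n → ↥B → ℝ) (hq : ∀ i, ∑ a, q i a = 1) (i j : Fin n)
    (hij : i ≠ j) (g h : ↥B → ℝ) :
    ∑ x : Cube n, (∏ i, q i (x i)) * (g (x i) * h (x j)) =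
      (∑ a, q i a * g a) * ∑ a, q j a * h a := by
  have := prod_exp q (fun l a => (if l = i then g a else 1) * (if l = j then h a else 1))
  simp only [Finset.prod_mul_distrib, Finset.prod_ite_eq', Finset.mem_univ, if_true] at this
  rw [this]
  have e : ∀ l, ∑ a, q l a * ((if l = i then g a else 1) * (if l = j then h a else 1)) =
      (if l = i then ∑ a, q l a * g a else 1) * (if l = j then ∑ a, q l a * h a else 1) := by
    intro l
    by_cases h1 : l = i
    · subst h1
      simp [hij]
    · by_cases h2 : l = j
      · subst h2
        simp [h1]
      · simp only [h1, h2, if_false, mul_one, hq]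
  simp only [e, Finset.prod_mul_distrib, Finset.prod_ite_eq', Finset.mem_univ, if_true]

lemma prod_exp_one {n : ℕ} (q : Fin n → ↥B → ℝ) (hq : ∀ i, ∑ a, q i a = 1) (i : Fin n)
    (g : ↥B → ℝ) :
    ∑ x : Cube n, (∏ i, q i (x i)) * g (x i) = ∑ a, q i a * g a := by
  have := prod_exp q (fun l a => (if l = i then g a else 1))
  simp only [Finset.prod_ite_eq', Finset.mem_univ, if_true] at this
  rw [this]
  have e : ∀ l, ∑ a, q l a * (if l = i then g a else 1) =
      (if l = i then ∑ a, q l a * g a else 1) := by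
    intro l
    by_cases h1 : l = i
    · simp [h1]
    · simp only [h1, if_false, mul_one, hq]
  simp only [e, Finset.prod_ite_eq', Finset.mem_univ, if_true]

lemma prod_exp_zero {n : ℕ} (q : Fin n → ↥B → ℝ) (hq : ∀ i, ∑ a, q i a = 1) :
    ∑ x : Cube n, (∏ i, q i (x i)) = 1 := by
  rw [← Fintype.prod_sum]
  exact Finset.prod_eq_one fun i _ => hq i

section
variable {n k : ℕ} (F : SAFamily n k) (S : Finset (Fin n))

lemma card_ins {S : Finset (Fin n)} (hk : S.card + 1 ≤ k) (i : Fin n) :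
    (insert i S).card ≤ k := (Finset.card_insert_le i S).trans hk

lemma qq_nonneg (hk : S.card + 1 ≤ k) (i : Fin n) (y : Asg S) (a : ↥B) : 0 ≤ qq F S i y a := by
  refine div_nonneg ?_ (F.nonneg S (by omega) y)
  refine Finset.sum_nonneg fun z _ => mul_nonneg (F.nonneg _ (card_ins hk i) z) ?_
  refine mul_nonneg (ind_nonneg _ _) ?_
  split_ifs <;> norm_num

lemma sum_spin_ite (b : ↥B) (g : ↥B → ℝ) : ∑ a : ↥B, (if b = a then 1 else 0) * g a = g b := by
  simp only [ite_mul, one_mul, zero_mul, Finset.sum_ite_eq, Finset.mem_univ, if_true]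

lemma qq_sum_mul (i : Fin n) (y : Asg S) (g : ↥B → ℝ) :
    ∑ a, qq F S i y a * g a = PE F (insert i S) (fun x => ind y x * g (x i)) / F.μ S y := by
  unfold qq
  simp only [div_mul_eq_mul_div, ← Finset.sum_div]
  congr 1
  have : (fun x : Cube n => ind y x * g (x i)) =
      fun x => ∑ a : ↥B, g a * (ind y x * (if x i = a then 1 else 0)) := by
    funext x
    rw [← sum_spin_ite (x i) g, Finset.mul_sum]
    exact Finset.sum_congr rfl fun a _ => by ring
  rw [this, PE_sum]
  refine Finset.sum_congr rfl fun a _ => ?_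
  rw [PE_smul, mul_comm]

lemma qq_sum (hk : S.card + 1 ≤ k) (i : Fin n) (y : Asg S) (hy : F.μ S y ≠ 0) :
    ∑ a, qq F S i y a = 1 := by
  have := qq_sum_mul F S i y (fun _ => 1)
  simp only [mul_one] at this
  rw [this]
  have h2 := PE_ind F (Finset.subset_insert i S) (card_ins hk i) y
  simp only [h2]
  exact div_self hy

lemma mm_eq_qq (i : Fin n) (y : Asg S) : mm F S i y = ∑ a, qq F S i y a * (a : ℝ) :=
  (qq_sum_mul F S i y (fun a => (a : ℝ))).symm

lemma qq_mem (hk : S.card + 1 ≤ k) (i : Fin n) (hi : i ∈ S) (y : Asg S) (hy : F.μ S y ≠ 0)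
    (a : ↥B) : qq F S i y a = if y ⟨i, hi⟩ = a then 1 else 0 := by
  unfold qq
  have e : (fun x : Cube n => ind y x * (if x i = a then 1 else 0)) =
      fun x => (if y ⟨i, hi⟩ = a then 1 else 0) * ind y x := by
    funext x
    unfold ind
    split_ifs with h1 h2 h3 h3 <;> try simp
    · exact h3 (by rw [← h2, ← h1]; rfl)
    · exact h2 (by rw [← h3, ← h1]; rfl)
  rw [e, PE_smul]
  have h2 := PE_ind F (Finset.subset_insert i S) (card_ins hk i) y
  simp only [h2]
  rw [mul_div_assoc, div_self hy, mul_one]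

lemma qq_notMem (i : Fin n) (hi : i ∉ S) (y : Asg S) (a : ↥B) :
    qq F S i y a = F.μ (insert i S) (extAsg i y a) / F.μ S y := by
  unfold qq PE
  congr 1
  rw [Finset.sum_eq_single (extAsg i y a)]
  · have h1 : rs S (ext (extAsg i y a)) = y := by
      funext l
      have : l.1 ≠ i := fun h => hi (h ▸ l.2)
      simp [rs, ext, extAsg, this]
    have h2 : ext (extAsg i y a) i = a := by simp [ext, extAsg]
    simp [ind, h1, h2]
  · intro z _ hz
    have : ¬ (rs S (ext z) = y ∧ ext z i = a) := by
      rintro ⟨h1, h2⟩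
      apply hz
      funext l
      unfold extAsg
      split_ifs with hl
      · rw [← h2]
        simp only [ext, Finset.mem_insert_self, dif_pos]
        congr 1
        exact Subtype.ext hl
      · have : l.1 ∈ S := (Finset.mem_insert.1 l.2).resolve_left hl
        have h3 := congrFun h1 ⟨l.1, this⟩
        rw [← h3]
        simp [rs, ext]
    unfold ind
    by_cases h1 : rs S (ext z) = y
    · have h2 : ¬ (ext z i = a) := fun h2 => this ⟨h1, h2⟩
      simp [h2]
    · simp [h1]
  · simp

/-- The objective's entropy term for a fixed `S`. -/
def KK : ℝ := ent (F.μ S) + ∑ i ∈ Sᶜ, condEnt F S i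

lemma KK_eq (hk : S.card + 1 ≤ k) : KK F S =
    -∑ y, F.μ S y * (Real.log (F.μ S y) + ∑ i, ∑ a, qq F S i y a * Real.log (qq F S i y a)) := by
  have h1 : ∀ i ∈ Sᶜ, condEnt F S i =
      -∑ y, F.μ S y * ∑ a, qq F S i y a * Real.log (qq F S i y a) := by
    intro i hi
    rw [Finset.mem_compl] at hi
    unfold condEnt ent
    rw [← Finset.sum_neg_distrib]
    refine Finset.sum_congr rfl fun y _ => ?_
    simp only [qq_notMem F S i hi]
    ring
  have h2 : ∀ i ∈ S, ∑ y, F.μ S y * ∑ a, qq F S i y a * Real.log (qq F S i y a) = 0 := by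
    intro i hi
    refine Finset.sum_eq_zero fun y _ => ?_
    rcases eq_or_ne (F.μ S y) 0 with h | h
    · simp [h]
    · simp only [qq_mem F S hk i hi y h]
      rw [Finset.sum_eq_zero, mul_zero]
      intro a _
      split_ifs <;> simp
  have h3 : ∑ i, ∑ y, F.μ S y * ∑ a, qq F S i y a * Real.log (qq F S i y a) =
      ∑ i ∈ Sᶜ, ∑ y, F.μ S y * ∑ a, qq F S i y a * Real.log (qq F S i y a) := by
    rw [← Finset.sum_add_sum_compl S, Finset.sum_eq_zero h2, zero_add]
  unfold KK ent
  rw [Finset.sum_congr rfl h1, Finset.sum_neg_distrib, ← h3, Finset.sum_comm]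
  simp only [mul_add, Finset.sum_add_distrib, Finset.mul_sum]
  ring

/-- The rounded distribution. -/
def nu (x : Cube n) : ℝ := F.μ S (rs S x) * ∏ i, qq F S i (rs S x) (x i)

lemma nu_nonneg (hk : S.card + 1 ≤ k) (x : Cube n) : 0 ≤ nu F S x :=
  mul_nonneg (F.nonneg S (by omega) _) (Finset.prod_nonneg fun i _ => qq_nonneg F S hk i _ _)

lemma nu_key (hk : S.card + 1 ≤ k) (G : Asg S → Cube n → ℝ) :
    ∑ x, nu F S x * G (rs S x) x =
      ∑ y, F.μ S y * ∑ x : Cube n, (∏ i, qq F S i y (x i)) * G y x := by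
  have h : ∀ (y : Asg S) (x : Cube n), F.μ S y * ((∏ i, qq F S i y (x i)) * G y x) =
      ind y x * (F.μ S y * ((∏ i, qq F S i y (x i)) * G y x)) := by
    intro y x
    unfold ind
    split_ifs with hx
    · simp
    · rcases eq_or_ne (F.μ S y) 0 with h0 | h0
      · simp [h0]
      · have : ∃ i, ∃ hi : i ∈ S, y ⟨i, hi⟩ ≠ x i := by
          by_contra hc
          push Not at hc
          apply hx
          funext l
          exact (hc l.1 l.2).symm
        obtain ⟨i, hi, hne⟩ := this
        have hp : ∏ i, qq F S i y (x i) = 0 := by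
          refine Finset.prod_eq_zero (Finset.mem_univ i) ?_
          rw [qq_mem F S hk i hi y h0, if_neg hne]
        rw [hp]; simp
  simp only [Finset.mul_sum]
  rw [Finset.sum_comm]
  refine Finset.sum_congr rfl fun x _ => ?_
  rw [Finset.sum_congr rfl fun y _ => h y x, sum_ind (fun y => F.μ S y * ((∏ i, qq F S i y (x i)) * G y x)) x, nu]
  ring

lemma nu_sum (hk : S.card + 1 ≤ k) : ∑ x, nu F S x = 1 := by
  have := nu_key F S hk (fun _ _ => 1)
  simp only [mul_one] at this
  rw [this, ← F.sum_one S (by omega)]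
  refine Finset.sum_congr rfl fun y _ => ?_
  rcases eq_or_ne (F.μ S y) 0 with h0 | h0
  · simp [h0]
  · rw [prod_exp_zero _ (fun i => qq_sum F S hk i y h0), mul_one]

lemma log_nu (x : Cube n) (hx : nu F S x ≠ 0) : Real.log (nu F S x) =
    Real.log (F.μ S (rs S x)) + ∑ i, Real.log (qq F S i (rs S x) (x i)) := by
  unfold nu at hx ⊢
  rw [Real.log_mul (left_ne_zero_of_mul hx) (right_ne_zero_of_mul hx), Real.log_prod]
  exact fun i hi => (Finset.prod_ne_zero_iff.1 (right_ne_zero_of_mul hx)) i hi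

lemma nu_log (hk : S.card + 1 ≤ k) : ∑ x, nu F S x * Real.log (nu F S x) = - KK F S := by
  have h1 : ∀ x, nu F S x * Real.log (nu F S x) = nu F S x *
      (fun (y : Asg S) (x : Cube n) => Real.log (F.μ S y) + ∑ i, Real.log (qq F S i y (x i)))
        (rs S x) x := by
    intro x
    rcases eq_or_ne (nu F S x) 0 with h0 | h0
    · simp [h0]
    · rw [log_nu F S x h0]
  rw [Finset.sum_congr rfl fun x _ => h1 x]
  refine (nu_key F S hk (fun (y : Asg S) (x : Cube n) =>
    Real.log (F.μ S y) + ∑ i, Real.log (qq F S i y (x i)))).trans ?_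
  rw [KK_eq F S hk, neg_neg]
  refine Finset.sum_congr rfl fun y _ => ?_
  rcases eq_or_ne (F.μ S y) 0 with h0 | h0
  · simp [h0]
  · congr 1
    have hq := fun i => qq_sum F S hk i y h0
    simp only [mul_add, Finset.sum_add_distrib, Finset.mul_sum]
    rw [← Finset.sum_mul, prod_exp_zero _ hq, one_mul, Finset.sum_comm]
    congr 1
    refine Finset.sum_congr rfl fun i _ => ?_
    exact prod_exp_one _ hq i (fun a => Real.log (qq F S i y a))

lemma nu_pair (hk : S.card + 1 ≤ k) (i j : Fin n) (hij : i ≠ j) :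
    ∑ x, nu F S x * ((x i : ℝ) * (x j : ℝ)) = ∑ y, F.μ S y * (mm F S i y * mm F S j y) := by
  have := nu_key F S hk (fun _ x => (x i : ℝ) * (x j : ℝ))
  rw [this]
  refine Finset.sum_congr rfl fun y _ => ?_
  rcases eq_or_ne (F.μ S y) 0 with h0 | h0
  · simp [h0]
  · rw [mm_eq_qq, mm_eq_qq]
    rw [prod_exp_two _ (fun i => qq_sum F S hk i y h0) i j hij (fun a => (a : ℝ))
      (fun a => (a : ℝ))]

lemma pairExp_PE (i j : Fin n) :
    pairExp F i j = PE F {i, j} (fun x => (x i : ℝ) * (x j : ℝ)) := by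
  unfold pairExp PE
  refine Finset.sum_congr rfl fun y _ => ?_
  simp [ext, mul_assoc]

lemma pairExp_self (hk : 2 ≤ k) (i : Fin n) : pairExp F i i = 1 := by
  rw [pairExp_PE]
  simp only [spin_sq]
  exact PE_one F _ (Finset.card_le_two.trans hk)

lemma pairExp_eq (hk : S.card + 2 ≤ k) (i j : Fin n) :
    pairExp F i j = ∑ y, F.μ S y * cc F S i j y := by
  have hT := card_union_le hk i j
  rw [pairExp_PE, ← PE_marg F (S := {i, j}) (T := insert i S ∪ insert j S) (by grind) hT
    ((Dep.coord (i := i) (by simp) (fun a => (a : ℝ))).mul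
      (Dep.coord (i := j) (by simp) (fun a => (a : ℝ)))), PE_split F S]
  exact Finset.sum_congr rfl fun y _ => PE_ind_xx F i j subset_rfl hT y

lemma upper (hk : S.card + 2 ≤ k) (J : Fin n → Fin n → ℝ) :
    (∑ i, ∑ j, J i j * pairExp F i j) + KK F S ≤
      Real.log (∑ x : Cube n, Real.exp (∑ i, ∑ j, J i j * (x i : ℝ) * (x j : ℝ))) +
        ∑ i, ∑ j, |J i j| * ∑ y, F.μ S y * |cv F S i j y| := by
  have hk1 : S.card + 1 ≤ k := by omega
  have hg := gibbs (nu F S)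
    (fun x : Cube n => Real.exp (∑ i, ∑ j, J i j * (x i : ℝ) * (x j : ℝ)))
    (nu_nonneg F S hk1) (fun x => (Real.exp_pos _).le) (fun x _ => Real.exp_pos _)
    (nu_sum F S hk1)
  simp only [Real.log_exp, mul_sub, Finset.sum_sub_distrib, nu_log F S hk1] at hg
  have hE : ∑ x : Cube n, nu F S x * ∑ i, ∑ j, J i j * (x i : ℝ) * (x j : ℝ) =
      ∑ i, ∑ j, J i j * ∑ x, nu F S x * ((x i : ℝ) * (x j : ℝ)) := by
    simp only [Finset.mul_sum]
    rw [Finset.sum_comm]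
    refine Finset.sum_congr rfl fun i _ => ?_
    rw [Finset.sum_comm]
    exact Finset.sum_congr rfl fun j _ => Finset.sum_congr rfl fun x _ => by ring
  rw [hE] at hg
  have hdiff : ∀ i j, J i j * pairExp F i j ≤
      J i j * ∑ x, nu F S x * ((x i : ℝ) * (x j : ℝ)) +
        |J i j| * ∑ y, F.μ S y * |cv F S i j y| := by
    intro i j
    have hmu : ∀ y, 0 ≤ F.μ S y := fun y => F.nonneg S (by omega) y
    by_cases hij : i = j
    · subst hij
      rw [pairExp_self F (by omega)]
      simp only [spin_sq, mul_one, nu_sum F S hk1]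
      have : 0 ≤ |J i i| * ∑ y, F.μ S y * |cv F S i i y| :=
        mul_nonneg (abs_nonneg _) (Finset.sum_nonneg fun y _ => mul_nonneg (hmu y) (abs_nonneg _))
      linarith
    · rw [pairExp_eq F S hk, nu_pair F S hk1 i j hij]
      have e : ∑ y, F.μ S y * cc F S i j y = ∑ y, F.μ S y * (mm F S i y * mm F S j y) +
          ∑ y, F.μ S y * cv F S i j y := by
        rw [← Finset.sum_add_distrib]
        exact Finset.sum_congr rfl fun y _ => by unfold cv; ring
      have h1 : |∑ y, F.μ S y * cv F S i j y| ≤ ∑ y, F.μ S y * |cv F S i j y| := by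
        refine (Finset.abs_sum_le_sum_abs _ _).trans (Finset.sum_le_sum fun y _ => ?_)
        rw [abs_mul, abs_of_nonneg (hmu y)]
      have h2 : J i j * ∑ y, F.μ S y * cv F S i j y ≤
          |J i j| * ∑ y, F.μ S y * |cv F S i j y| := by
        refine (le_abs_self _).trans ?_
        rw [abs_mul]
        exact mul_le_mul_of_nonneg_left h1 (abs_nonneg _)
      rw [e, mul_add]
      linarith
  have hsum : ∑ i, ∑ j, J i j * pairExp F i j ≤
      ∑ i, ∑ j, J i j * ∑ x, nu F S x * ((x i : ℝ) * (x j : ℝ)) +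
        ∑ i, ∑ j, |J i j| * ∑ y, F.μ S y * |cv F S i j y| := by
    rw [← Finset.sum_add_distrib]
    refine Finset.sum_le_sum fun i _ => ?_
    rw [← Finset.sum_add_distrib]
    exact Finset.sum_le_sum fun j _ => hdiff i j
  linarith

end

/-! ### True distributions -/

section
variable {n : ℕ} (p : Cube n → ℝ) (hp : ∀ x, 0 ≤ p x) (h1 : ∑ x, p x = 1)

lemma sum_ind_weight {T : Finset (Fin n)} (f : Cube n → ℝ) (hf : Dep T f) :
    ∑ y : Asg T, (∑ x, ind y x * p x) * f (ext y) = ∑ x, p x * f x := by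
  simp only [Finset.sum_mul]
  rw [Finset.sum_comm]
  refine Finset.sum_congr rfl fun x _ => ?_
  rw [← hf.ext_rs x, ← sum_ind (fun y => p x * f (ext y)) x]
  exact Finset.sum_congr rfl fun y _ => by ring

/-- The family of true marginals. -/
def famOf (k : ℕ) : SAFamily n k where
  μ := fun S y => ∑ x, ind y x * p x
  nonneg := fun S _ y => Finset.sum_nonneg fun x _ => mul_nonneg (ind_nonneg _ _) (hp x)
  sum_one := fun S _ => by
    have := sum_ind_weight p (T := S) (fun _ => 1) (fun _ _ _ => rfl)
    simp only [mul_one] at this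
    rw [this, h1]
  consistent := by
    intro S T _ z
    have key : ∀ (R : Finset (Fin n)) (h : S ∩ T ⊆ R),
        margTo (fun y : Asg R => ∑ x, ind y x * p x) h z = ∑ x, p x * ind z x := by
      intro R h
      rw [← sum_ind_weight p (T := R) (ind z) ((Dep.ind z).mono h)]
      unfold margTo
      refine Finset.sum_congr rfl fun y _ => ?_
      rw [ind, rs_ext_sub h]
      split_ifs <;> simp
    rw [key S, key T]

/-- The Lasserre solution of a true distribution. -/
def lasOf (k : ℕ) : LasserreSol n k where
  toSAFamily := famOf p hp h1 k
  dim := Fintype.card (Cube n)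
  vec := fun S α => WithLp.toLp 2 (fun l =>
    ind α ((Fintype.equivFin (Cube n)).symm l) * Real.sqrt (p ((Fintype.equivFin (Cube n)).symm l)))
  inner_eq := by
    intro S T _ α β
    have h2 := sum_ind_weight p (T := S ∪ T) (fun x => ind α x * ind β x)
      (((Dep.ind α).mono Finset.subset_union_left).mul
        ((Dep.ind β).mono Finset.subset_union_right))
    have h3 : ∑ y : Asg (S ∪ T),
        (if res Finset.subset_union_left y = α ∧ res Finset.subset_union_right y = β
        then (famOf p hp h1 k).μ (S ∪ T) y else 0) = ∑ x, p x * (ind α x * ind β x) := by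
      rw [← h2]
      refine Finset.sum_congr rfl fun y _ => ?_
      rw [ind, ind, rs_ext_sub Finset.subset_union_left, rs_ext_sub Finset.subset_union_right]
      by_cases ha : res Finset.subset_union_left y = α
      · by_cases hb : res Finset.subset_union_right y = β
        · simp [ha, hb, famOf]
        · simp [hb]
      · simp [ha]
    rw [h3, PiLp.inner_apply]
    rw [← Equiv.sum_comp (Fintype.equivFin (Cube n)).symm]
    refine Finset.sum_congr rfl fun l _ => ?_
    simp only [RCLike.inner_apply, conj_trivial]
    have := Real.mul_self_sqrt (hp ((Fintype.equivFin (Cube n)).symm l))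
    linear_combination (ind α ((Fintype.equivFin (Cube n)).symm l) *
      ind β ((Fintype.equivFin (Cube n)).symm l)) * this

lemma PE_famOf (k : ℕ) {T : Finset (Fin n)} (f : Cube n → ℝ) (hf : Dep T f) :
    PE (famOf p hp h1 k) T f = ∑ x, p x * f x := sum_ind_weight p f hf

lemma ent_le (hpos : ∀ x, 0 < p x) (k : ℕ) (S : Finset (Fin n)) (hk : S.card + 1 ≤ k) :
    -∑ x, p x * Real.log (p x) ≤ KK (famOf p hp h1 k) S := by
  set F := famOf p hp h1 k with hF
  have hmu : ∀ y, F.μ S y = ∑ x, ind y x * p x := fun y => rfl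
  have hq : ∀ i y a, F.μ S y * qq F S i y a =
      ∑ x, p x * (ind y x * (if x i = a then 1 else 0)) := by
    intro i y a
    rw [← PE_ind_q F i subset_rfl (card_ins hk i), PE_famOf]
    exact ((Dep.ind y).mono (Finset.subset_insert _ _)).mul
      (Dep.coord (Finset.mem_insert_self _ _) (fun b => if b = a then 1 else 0))
  have hle : ∀ (x : Cube n), 0 < F.μ S (rs S x) := by
    intro x
    rw [hmu]
    refine lt_of_lt_of_le (hpos x) ?_
    have := Finset.single_le_sum (f := fun x' => ind (rs S x) x' * p x')
      (fun x' _ => mul_nonneg (ind_nonneg _ _) (hp x')) (Finset.mem_univ x)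
    simpa [ind] using this
  have hqpos : ∀ (x : Cube n) i, 0 < qq F S i (rs S x) (x i) := by
    intro x i
    have h2 : 0 < F.μ S (rs S x) * qq F S i (rs S x) (x i) := by
      rw [hq]
      refine lt_of_lt_of_le (hpos x) ?_
      have := Finset.single_le_sum
        (f := fun x' => p x' * (ind (rs S x) x' * (if x' i = x i then 1 else 0)))
        (fun x' _ => mul_nonneg (hp x') (mul_nonneg (ind_nonneg _ _)
          (by split_ifs <;> norm_num))) (Finset.mem_univ x)
      simpa [ind] using this
    exact pos_of_mul_pos_right h2 (hle x).le
  have hnu : ∀ x, 0 < nu F S x := fun x =>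
    mul_pos (hle x) (Finset.prod_pos fun i _ => hqpos x i)
  have hg := gibbs p (nu F S) hp (fun x => (hnu x).le) (fun x _ => hnu x) h1
  rw [nu_sum F S hk, Real.log_one] at hg
  simp only [mul_sub, Finset.sum_sub_distrib] at hg
  have hcross : ∑ x, p x * Real.log (nu F S x) = - KK F S := by
    rw [KK_eq F S hk, neg_neg]
    simp only [fun x => log_nu F S x (hnu x).ne', mul_add, Finset.sum_add_distrib]
    congr 1
    · have := sum_ind_weight p (T := S) (fun x => Real.log (F.μ S (rs S x)))
        (Dep.rs (fun y => Real.log (F.μ S y)))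
      rw [← this]
      simp only [rs_ext]
      rfl
    · simp only [Finset.mul_sum]
      rw [Finset.sum_comm, Finset.sum_comm (s := Finset.univ (α := Asg S))]
      refine Finset.sum_congr rfl fun i _ => ?_
      simp only [← mul_assoc, hq, Finset.sum_mul]
      calc ∑ x, p x * Real.log (qq F S i (rs S x) (x i))
          = ∑ x, ∑ y : Asg S, ∑ a, p x * (ind y x * (if x i = a then 1 else 0)) *
              Real.log (qq F S i y a) := by
            refine Finset.sum_congr rfl fun x _ => ?_
            rw [← sum_ind (fun y => p x * Real.log (qq F S i y (x i))) x]
            refine Finset.sum_congr rfl fun y _ => ?_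
            rw [← sum_spin_ite (x i) (fun a => Real.log (qq F S i y a))]
            simp only [Finset.mul_sum]
            exact Finset.sum_congr rfl fun a _ => by ring
        _ = ∑ y : Asg S, ∑ x, ∑ a, p x * (ind y x * (if x i = a then 1 else 0)) *
              Real.log (qq F S i y a) := Finset.sum_comm
        _ = _ := by
            refine Finset.sum_congr rfl fun y _ => ?_
            rw [Finset.sum_comm]
            refine Finset.sum_congr rfl fun a _ => Finset.sum_congr rfl fun x _ => ?_
            ring
  linarith

end

end LTR

/-- Main theorem, low threshold rank case: there is a universal `c > 0` such that
for any regular Ising model with adjacency matrix `A`, `ε ∈ (0,1)`, and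
`t = ⌈rank(cε²)/(cε²)⌉`, the value `V` of the level-`(t+2)` Lasserre relaxation
with the augmented mean-field pseudo-entropy (at level `t`) satisfies
`log Z ≤ V ≤ log Z + ε n J'`. -/
theorem low_threshold_rank_ising_Lasserre_approximation :
    ∃ c : ℝ, 0 < c ∧
      ∀ n : ℕ, 1 ≤ n → ∀ ε : ℝ, ε ∈ Set.Ioo (0 : ℝ) 1 →
        ∀ J : Fin n → Fin n → ℝ, (∀ i j : Fin n, J i j = J j i) →
        ∀ J' : ℝ, 0 < J' → (∀ i : Fin n, ∑ j : Fin n, |J i j| = J') →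
        ∀ A : Matrix (Fin n) (Fin n) ℝ, A = (fun i j : Fin n => |J i j| / J') →
        ∀ hA : A.IsHermitian,
        ∀ t : ℕ, t = ⌈(thresholdRank hA (c * ε ^ 2) : ℝ) / (c * ε ^ 2)⌉₊ →
        ∀ Z : ℝ, Z = ∑ x : Cube n,
            Real.exp (∑ i : Fin n, ∑ j : Fin n, J i j * (x i : ℝ) * (x j : ℝ)) →
        ∀ V : ℝ, V = sSup {v : ℝ | ∃ L : LasserreSol n (t + 2),
            v = (∑ i : Fin n, ∑ j : Fin n, J i j * pairExp L.toSAFamily i j)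
                  + pseudoEnt L.toSAFamily t} →
        Real.log Z ≤ V ∧ V ≤ Real.log Z + ε * n * J' := by
  refine ⟨1 / 4, by norm_num, ?_⟩
  intro n hn ε hε J hJs J' hJ' hJr A hAdef hA t ht Z hZ V hV
  obtain ⟨hε0, hε1⟩ := hε
  have hA' : ∀ i j, A i j = |J i j| / J' := fun i j => by rw [hAdef]
  have hA0 : ∀ i j, 0 ≤ A i j := fun i j => by rw [hA']; positivity
  have hA1 : ∀ j, ∑ i, A i j = 1 := by
    intro j
    simp only [hA', ← Finset.sum_div]
    have : ∑ i, |J i j| = J' := by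
      rw [← hJr j]
      exact Finset.sum_congr rfl fun i _ => by rw [hJs]
    rw [this, div_self hJ'.ne']
  have htle : (thresholdRank hA (1 / 4 * ε ^ 2) : ℝ) / (1 / 4 * ε ^ 2) ≤ t := by
    rw [ht]; exact Nat.le_ceil _
  -- upper bound for every solution
  have hub : ∀ L : LasserreSol n (t + 2),
      (∑ i, ∑ j, J i j * pairExp L.toSAFamily i j) + pseudoEnt L.toSAFamily t
        ≤ Real.log Z + ε * n * J' := by
    intro L
    obtain ⟨S, hS, hgood⟩ := LTR.exists_good L hA hA0 hA1 hn ε hε0 t le_rfl htle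
    have h1 := LTR.upper L.toSAFamily S (by omega) J
    rw [← hZ] at h1
    have h2 : pseudoEnt L.toSAFamily t ≤ LTR.KK L.toSAFamily S :=
      Finset.inf'_le (fun S => ent (L.toSAFamily.μ S) + ∑ i ∈ Sᶜ, condEnt L.toSAFamily S i)
        (Finset.mem_filter.mpr ⟨Finset.mem_univ S, hS⟩)
    have h3 : ∑ i, ∑ j, |J i j| * ∑ y, L.μ S y * |LTR.cv L.toSAFamily S i j y| =
        (∑ i, ∑ j, A i j * ∑ y, L.μ S y * |LTR.cv L.toSAFamily S i j y|) * J' := by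
      rw [Finset.sum_mul]
      refine Finset.sum_congr rfl fun i _ => ?_
      rw [Finset.sum_mul]
      refine Finset.sum_congr rfl fun j _ => ?_
      rw [hA']
      field_simp
    have h4 := mul_le_mul_of_nonneg_right hgood hJ'.le
    linarith
  -- the Gibbs measure
  set E : Cube n → ℝ := fun x => ∑ i, ∑ j, J i j * (x i : ℝ) * (x j : ℝ) with hE
  have hne : Nonempty (Cube n) := ⟨fun _ => LTR.bOne⟩
  have hZpos : 0 < Z := by
    rw [hZ]
    exact Finset.sum_pos (fun x _ => Real.exp_pos _) Finset.univ_nonempty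
  set p : Cube n → ℝ := fun x => Real.exp (E x) / Z with hp
  have hpos : ∀ x, 0 < p x := fun x => div_pos (Real.exp_pos _) hZpos
  have hp1 : ∑ x, p x = 1 := by
    rw [hp, ← Finset.sum_div, ← hZ, div_self hZpos.ne']
  set L := LTR.lasOf p (fun x => (hpos x).le) hp1 (t + 2) with hL
  have hval : Real.log Z ≤
      (∑ i, ∑ j, J i j * pairExp L.toSAFamily i j) + pseudoEnt L.toSAFamily t := by
    have hent : -∑ x, p x * Real.log (p x) ≤ pseudoEnt L.toSAFamily t := by
      refine Finset.le_inf' _ _ fun S hS => ?_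
      rw [Finset.mem_filter] at hS
      exact LTR.ent_le p (fun x => (hpos x).le) hp1 hpos (t + 2) S (by omega)
    have hpair : ∀ i j, pairExp L.toSAFamily i j = ∑ x, p x * ((x i : ℝ) * (x j : ℝ)) := by
      intro i j
      rw [LTR.pairExp_PE]
      exact LTR.PE_famOf p (fun x => (hpos x).le) hp1 (t + 2) _
        ((LTR.Dep.coord (i := i) (by simp) (fun a => (a : ℝ))).mul
          (LTR.Dep.coord (i := j) (by simp) (fun a => (a : ℝ))))
    have hEn : ∑ i, ∑ j, J i j * pairExp L.toSAFamily i j = ∑ x, p x * E x := by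
      simp only [hpair, hE, Finset.mul_sum]
      symm
      rw [Finset.sum_comm]
      refine Finset.sum_congr rfl fun i _ => ?_
      rw [Finset.sum_comm]
      exact Finset.sum_congr rfl fun j _ => Finset.sum_congr rfl fun x _ => by ring
    have hlog : ∑ x, p x * Real.log (p x) = ∑ x, p x * E x - Real.log Z := by
      have : ∀ x, p x * Real.log (p x) = p x * E x - p x * Real.log Z := by
        intro x
        rw [hp]
        simp only
        rw [Real.log_div (Real.exp_pos _).ne' hZpos.ne', Real.log_exp, mul_sub]
      rw [Finset.sum_congr rfl fun x _ => this x, Finset.sum_sub_distrib, ← Finset.sum_mul, hp1,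
        one_mul]
    rw [hEn]
    linarith
  rw [hV]
  constructor
  · refine le_trans hval (le_csSup ⟨Real.log Z + ε * n * J', ?_⟩ ⟨L, rfl⟩)
    rintro v ⟨L', rfl⟩
    exact hub L'
  · refine csSup_le ⟨_, L, rfl⟩ ?_
    rintro v ⟨L', rfl⟩
    exact hub L'
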